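/- arXiv:1110.5277 — 3 statements merged into one kernel-verified Lean document; each statement's English description precedes it below -/
import Mathlib

section
/- Let α ∈ ℝ and 0 < β ≤ 1/4. Then Θ_α(|p|²) = |Θ_α(p)|² for every p ∈ 𝔗₁(F₁(α,β)), and consequently Θ_α maps 𝔖₁(F₁(α,β)) = {|p|² : p ∈ 𝔗₁(F₁(α,β))} onto 𝔖₂(F₂(α,β)) = {|q|² : q ∈ 𝔗₂(F₂(α,β))}. -/
/-!
On coefficients `Θ_α` is the push-forward along `j ↦ (j, θ_α(j))`, and `|p|²` has the
autocorrelation of the coefficients of `p` as its coefficients. Autocorrelation commutes with the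
push-forward along a map `φ` satisfying `φ (i - j) = φ i - φ j` for the frequencies `i`, `j`
involved. If `|θ_α(i) - iα|` and `|θ_α(j) - jα|` are less than `1/4`, then `θ_α(i) - θ_α(j)` is
within `1/2` of `(i - j)α`, so it is `θ_α(i - j)`. Finally, an integer within `1/2` of `jα` can only
be `θ_α(j)`, so `j ↦ (j, θ_α(j))` maps `F₁(α,β)` onto `F₂(α,β)`.
-/

open Complex MeasureTheory Real Filter

noncomputable section

/-- The circle group `𝕋 = ℝ/ℤ`. -/
abbrev 𝕋 := AddCircle (1 : ℝ)

/-- `θ_α(j)` : the smallest integer minimizing `|θ_α(j) − jα|`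
(the nearest integer to `jα`, rounding half down). -/
def thetaA (α : ℝ) (j : ℤ) : ℤ := ⌈(j : ℝ) * α - 1 / 2⌉

/-- The Bohr set `F₁(α,β) = {j ∈ ℤ : |θ_α(j) − jα| < β}`. -/
def F1set (α β : ℝ) : Set ℤ := {j | |(thetaA α j : ℝ) - (j : ℝ) * α| < β}

/-- `F₂(α,β) = {(j,k) ∈ ℤ² : |k − jα| < β}`. -/
def F2set (α β : ℝ) : Set (ℤ × ℤ) := {jk | |(jk.2 : ℝ) - (jk.1 : ℝ) * α| < β}

/-- `t : 𝕋 → ℂ` is a trigonometric polynomial. -/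
def IsTrigPoly1 (t : 𝕋 → ℂ) : Prop :=
  ∃ c : ℤ →₀ ℂ, t = fun x => ∑ j ∈ c.support, c j * fourier j x

/-- The frequency set of `t : 𝕋 → ℂ`. -/
def freq1 (t : 𝕋 → ℂ) : Set ℤ := {j | fourierCoeff t j ≠ 0}

/-- `𝔗₁(F)` : trigonometric polynomials on `𝕋` with frequencies in `F`. -/
def T1 (F : Set ℤ) : Set (𝕋 → ℂ) := {t | IsTrigPoly1 t ∧ freq1 t ⊆ F}

/-- `t : 𝕋² → ℂ` is a trigonometric polynomial. -/
def IsTrigPoly2 (t : 𝕋 × 𝕋 → ℂ) : Prop :=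
  ∃ c : (ℤ × ℤ) →₀ ℂ, t = fun p => ∑ jk ∈ c.support, c jk * fourier jk.1 p.1 * fourier jk.2 p.2

/-- Fourier coefficient on the 2-torus. -/
def coeff2 (t : 𝕋 × 𝕋 → ℂ) (jk : ℤ × ℤ) : ℂ :=
  ∫ x : 𝕋, (∫ y : 𝕋, t (x, y) * fourier (-jk.1) x * fourier (-jk.2) y
    ∂AddCircle.haarAddCircle) ∂AddCircle.haarAddCircle

/-- The frequency set of `t : 𝕋² → ℂ`. -/
def freq2 (t : 𝕋 × 𝕋 → ℂ) : Set (ℤ × ℤ) := {jk | coeff2 t jk ≠ 0}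

/-- `𝔗₂(F)` : trigonometric polynomials on `𝕋²` with frequencies in `F`. -/
def T2 (F : Set (ℤ × ℤ)) : Set (𝕋 × 𝕋 → ℂ) := {t | IsTrigPoly2 t ∧ freq2 t ⊆ F}

/-- The map `Θ_α : 𝔗₁ → 𝔗₂`, `Θ_α(t)(x,y) = Σ_j t̂(j) e_j(x) e_{θ_α(j)}(y)`. -/
def Theta (α : ℝ) (t : 𝕋 → ℂ) : 𝕋 × 𝕋 → ℂ :=
  fun p => ∑' j : ℤ, fourierCoeff t j * fourier j p.1 * fourier (thetaA α j) p.2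

/-- `𝔖₁(F) = {|p|² : p ∈ 𝔗₁(F)}`. -/
def S1 (F : Set ℤ) : Set (𝕋 → ℂ) :=
  {f | ∃ p ∈ T1 F, f = fun x => p x * (starRingEnd ℂ) (p x)}

/-- `𝔖₂(F) = {|q|² : q ∈ 𝔗₂(F)}`. -/
def S2 (F : Set (ℤ × ℤ)) : Set (𝕋 × 𝕋 → ℂ) :=
  {f | ∃ q ∈ T2 F, f = fun p => q p * (starRingEnd ℂ) (q p)}

/-- `𝔘₁(F)` : trigonometric polynomials that are uniform limits of elements of `𝔖₁(F)`. -/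
def U1 (F : Set ℤ) : Set (𝕋 → ℂ) :=
  {t | IsTrigPoly1 t ∧ ∃ s : ℕ → (𝕋 → ℂ), (∀ n, s n ∈ S1 F) ∧ TendstoUniformly s t atTop}

/-- `𝔘₂(F)` : trigonometric polynomials that are uniform limits of elements of `𝔖₂(F)`. -/
def U2 (F : Set (ℤ × ℤ)) : Set (𝕋 × 𝕋 → ℂ) :=
  {t | IsTrigPoly2 t ∧ ∃ s : ℕ → (𝕋 × 𝕋 → ℂ), (∀ n, s n ∈ S2 F) ∧ TendstoUniformly s t atTop}

/-- The difference set `F − F`. -/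
def diffSet {G : Type*} [Sub G] (F : Set G) : Set G := {x | ∃ u ∈ F, ∃ v ∈ F, x = u - v}

/-- `F ⊆ ℤ²` has Property A if `𝔘₂(F) = 𝔗₂⁺(F − F)`. -/
def PropertyA (F : Set (ℤ × ℤ)) : Prop :=
  U2 F = {t | IsTrigPoly2 t ∧ freq2 t ⊆ diffSet F ∧ ∀ p, ∃ r : ℝ, 0 ≤ r ∧ t p = (r : ℂ)}

section Autocorrelation

variable {G H R : Type*} [Sub G] [Sub H]

/-- The autocorrelation `k ↦ ∑_{i - j = k} c i * star (c j)` of a finitely supported function: the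
coefficients of `|p|²`, when `c` gives the coefficients of `p`. -/
def autocorrelation [NonUnitalNonAssocSemiring R] [StarRing R] (c : G →₀ R) : G →₀ R :=
  c.sum fun i a => c.sum fun j b => Finsupp.single (i - j) (a * star b)

lemma mapDomain_autocorrelation [NonUnitalNonAssocSemiring R] [StarRing R] {φ : G → H}
    {c : G →₀ R} (hφ : ∀ i ∈ c.support, ∀ j ∈ c.support, φ (i - j) = φ i - φ j) :
    (autocorrelation c).mapDomain φ = autocorrelation (c.mapDomain φ) := by
  have push_sum : autocorrelation (c.mapDomain φ) =
      c.sum fun i a => c.sum fun j b => Finsupp.single (φ i - φ j) (a * star b) := by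
    unfold autocorrelation
    rw [Finsupp.sum_mapDomain_index (by simp) (by simp [add_mul, Finsupp.sum_add])]
    congr! with _ a
    exact Finsupp.sum_mapDomain_index (by simp) (by simp [mul_add])
  rw [push_sum]
  simp only [autocorrelation, Finsupp.mapDomain_sum, Finsupp.mapDomain_single]
  exact Finsupp.sum_congr fun i hi => Finsupp.sum_congr fun j hj => by rw [hφ i hi j hj]

lemma linearCombination_autocorrelation [CommSemiring R] [StarRing R]
    {A : Type*} [Semiring A] [StarRing A] [Algebra R A] [StarModule R A] {χ : G → A}
    (hχ : ∀ i j, χ (i - j) = χ i * star (χ j)) (c : G →₀ R) :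
    Finsupp.linearCombination R χ (autocorrelation c) =
      Finsupp.linearCombination R χ c * star (Finsupp.linearCombination R χ c) := by
  simp only [autocorrelation, map_finsuppSum, Finsupp.linearCombination_single, hχ]
  simp only [Finsupp.linearCombination_apply, Finsupp.sum, star_sum, star_smul,
    Finset.sum_mul_sum, smul_mul_smul_comm]

end Autocorrelation

section TrigPoly

/-- The trigonometric polynomial `∑ⱼ c(j) e_j` on `𝕋` with coefficients `c`. -/
def trigPoly1 : (ℤ →₀ ℂ) →ₗ[ℂ] 𝕋 → ℂ :=
  Finsupp.linearCombination ℂ fun j => ⇑(fourier j : C(𝕋, ℂ))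

/-- The character `(x, y) ↦ e_j(x) e_k(y)` of `𝕋²` with frequency `(j, k)`. -/
def fourier2 (jk : ℤ × ℤ) : 𝕋 × 𝕋 → ℂ := fun q => fourier jk.1 q.1 * fourier jk.2 q.2

/-- The trigonometric polynomial `∑ c(j, k) e_j(x) e_k(y)` on `𝕋²` with coefficients `c`. -/
def trigPoly2 : (ℤ × ℤ →₀ ℂ) →ₗ[ℂ] 𝕋 × 𝕋 → ℂ :=
  Finsupp.linearCombination ℂ fourier2

lemma fourier_sub {T : ℝ} (i j : ℤ) :
    ⇑(fourier (i - j) : C(AddCircle T, ℂ)) = ⇑(fourier i) * star ⇑(fourier j) := by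
  ext x
  simp only [sub_eq_add_neg, fourier_add, fourier_neg, Pi.mul_apply, Pi.star_apply,
    starRingEnd_apply]

lemma fourier2_sub (u v : ℤ × ℤ) : fourier2 (u - v) = fourier2 u * star (fourier2 v) := by
  ext q
  simp only [fourier2, Prod.fst_sub, Prod.snd_sub, fourier_sub, Pi.mul_apply, Pi.star_apply,
    star_mul']
  ring

lemma trigPoly1_autocorrelation (c : ℤ →₀ ℂ) :
    trigPoly1 (autocorrelation c) = trigPoly1 c * star (trigPoly1 c) :=
  linearCombination_autocorrelation fourier_sub c

lemma trigPoly2_autocorrelation (c : ℤ × ℤ →₀ ℂ) :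
    trigPoly2 (autocorrelation c) = trigPoly2 c * star (trigPoly2 c) :=
  linearCombination_autocorrelation fourier2_sub c

lemma isTrigPoly1_iff_mem_range {t : 𝕋 → ℂ} : IsTrigPoly1 t ↔ t ∈ Set.range trigPoly1 := by
  refine exists_congr fun c => ?_
  rw [eq_comm, trigPoly1, Finsupp.linearCombination_apply, Finsupp.sum, Finset.sum_fn]
  rfl

lemma isTrigPoly2_iff_mem_range {t : 𝕋 × 𝕋 → ℂ} : IsTrigPoly2 t ↔ t ∈ Set.range trigPoly2 := by
  refine exists_congr fun c => ?_
  rw [eq_comm, trigPoly2, Finsupp.linearCombination_apply, Finsupp.sum, Finset.sum_fn]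
  simp only [Pi.smul_apply, fourier2, smul_eq_mul, mul_assoc]

lemma fourierCoeff_sum_smul_fourier {T : ℝ} [Fact (0 < T)] {ι : Type*} (s : Finset ι) (a : ι → ℂ)
    (n : ι → ℤ) :
    fourierCoeff (∑ i ∈ s, a i • ⇑(fourier (n i) : C(AddCircle T, ℂ))) =
      ∑ i ∈ s, Pi.single (n i) (a i) := by
  have integrable_term (i : ι) :
      Integrable (a i • ⇑(fourier (n i) : C(AddCircle T, ℂ))) AddCircle.haarAddCircle :=
    ((fourier (n i)).continuous.const_smul (a i)).integrable_of_hasCompactSupport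
      (.of_compactSpace _)
  rw [fourierCoeff.sum s _ fun i _ => integrable_term i]
  congr! with i
  ext j
  rw [fourierCoeff.const_smul, fourierCoeff_fourier, ← Pi.smul_apply, ← Pi.single_smul,
    smul_eq_mul, mul_one]

lemma fourierCoeff_trigPoly1 (c : ℤ →₀ ℂ) : fourierCoeff (trigPoly1 c) = c := by
  rw [trigPoly1, Finsupp.linearCombination_apply, Finsupp.sum, fourierCoeff_sum_smul_fourier]
  ext j
  simp +contextual [Finset.sum_apply, Pi.single_apply, eq_comm]

lemma coeff2_eq_fourierCoeff_fourierCoeff (t : 𝕋 × 𝕋 → ℂ) (j k : ℤ) :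
    coeff2 t (j, k) = fourierCoeff (fun x => fourierCoeff (fun y => t (x, y)) k) j := by
  simp only [coeff2, fourierCoeff, smul_eq_mul, ← integral_const_mul]
  congr! 4
  ring

lemma coeff2_trigPoly2 (c : ℤ × ℤ →₀ ℂ) : coeff2 (trigPoly2 c) = c := by
  ext ⟨j, k⟩
  have slice (x : 𝕋) : (fun y => trigPoly2 c (x, y)) =
      ∑ u ∈ c.support, (c u * fourier u.1 x) • ⇑(fourier u.2 : C(𝕋, ℂ)) := by
    ext y
    simp [trigPoly2, Finsupp.linearCombination_apply, Finsupp.sum, fourier2, Finset.sum_apply,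
      mul_assoc, -fourier_apply]
  have coeff_slice : (fun x => fourierCoeff (fun y => trigPoly2 c (x, y)) k) =
      ∑ u ∈ c.support, (if k = u.2 then c u else 0) • ⇑(fourier u.1 : C(𝕋, ℂ)) := by
    ext x
    simp only [slice, fourierCoeff_sum_smul_fourier, Finset.sum_apply, Pi.single_apply,
      Pi.smul_apply, smul_eq_mul, ite_mul, zero_mul]
  rw [coeff2_eq_fourierCoeff_fourierCoeff, coeff_slice, fourierCoeff_sum_smul_fourier,
    Finset.sum_apply, Finset.sum_eq_single (j, k)]
  · simp
  · rintro ⟨_, _⟩ - h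
    simp only [Pi.single_apply]
    grind
  · simp

lemma T1_eq_image_supported (F : Set ℤ) : T1 F = trigPoly1 '' Finsupp.supported ℂ ℂ F := by
  ext t
  constructor
  · rintro ⟨ht, hF⟩
    obtain ⟨c, rfl⟩ := isTrigPoly1_iff_mem_range.mp ht
    exact ⟨c, fun j hj => hF (by simpa [freq1, fourierCoeff_trigPoly1] using hj), rfl⟩
  · rintro ⟨c, hc, rfl⟩
    exact ⟨isTrigPoly1_iff_mem_range.mpr ⟨c, rfl⟩,
      fun j hj => hc (by simpa [freq1, fourierCoeff_trigPoly1] using hj)⟩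

lemma T2_eq_image_supported (F : Set (ℤ × ℤ)) :
    T2 F = trigPoly2 '' Finsupp.supported ℂ ℂ F := by
  ext t
  constructor
  · rintro ⟨ht, hF⟩
    obtain ⟨c, rfl⟩ := isTrigPoly2_iff_mem_range.mp ht
    exact ⟨c, fun u hu => hF (by simpa [freq2, coeff2_trigPoly2] using hu), rfl⟩
  · rintro ⟨c, hc, rfl⟩
    exact ⟨isTrigPoly2_iff_mem_range.mpr ⟨c, rfl⟩,
      fun u hu => hc (by simpa [freq2, coeff2_trigPoly2] using hu)⟩

lemma S1_eq_image_mul_star (F : Set ℤ) : S1 F = (fun p => p * star p) '' T1 F :=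
  Set.ext fun _ => exists_congr fun _ => and_congr_right fun _ => eq_comm

lemma S2_eq_image_mul_star (F : Set (ℤ × ℤ)) : S2 F = (fun q => q * star q) '' T2 F :=
  Set.ext fun _ => exists_congr fun _ => and_congr_right fun _ => eq_comm

end TrigPoly

section Theta

variable {α β γ : ℝ}

lemma thetaA_eq_of_abs_sub_lt {j k : ℤ} (h : |(k : ℝ) - j * α| < 1 / 2) : thetaA α j = k := by
  rw [abs_lt] at h
  rw [thetaA, Int.ceil_eq_iff]
  constructor <;> linarith

lemma thetaA_sub {i j : ℤ} (hi : i ∈ F1set α β) (hj : j ∈ F1set α γ) (hβγ : β + γ ≤ 1 / 2) :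
    thetaA α (i - j) = thetaA α i - thetaA α j := by
  apply thetaA_eq_of_abs_sub_lt
  push_cast
  calc |(thetaA α i - thetaA α j : ℝ) - (i - j) * α|
      = |(thetaA α i - i * α) - (thetaA α j - j * α)| := by ring_nf
    _ ≤ |thetaA α i - i * α| + |thetaA α j - j * α| := abs_sub _ _
    _ < β + γ := add_lt_add hi hj
    _ ≤ 1 / 2 := hβγ

/-- The lift `j ↦ (j, θ_α(j))` of a frequency on `𝕋` to a frequency on `𝕋²`: the effect of `Θ_α` on
characters. -/
def thetaLift (α : ℝ) (j : ℤ) : ℤ × ℤ := (j, thetaA α j)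

lemma thetaLift_sub {i j : ℤ} (hi : i ∈ F1set α β) (hj : j ∈ F1set α γ) (hβγ : β + γ ≤ 1 / 2) :
    thetaLift α (i - j) = thetaLift α i - thetaLift α j :=
  Prod.ext rfl (thetaA_sub hi hj hβγ)

lemma image_thetaLift_F1set (hβ : β ≤ 1 / 2) : thetaLift α '' F1set α β = F2set α β := by
  ext ⟨j, k⟩
  constructor
  · rintro ⟨_, hj, rfl, rfl⟩
    exact hj
  · intro hjk
    obtain rfl : thetaA α j = k := thetaA_eq_of_abs_sub_lt (lt_of_lt_of_le hjk hβ)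
    exact ⟨j, hjk, rfl⟩

lemma Theta_trigPoly1 (c : ℤ →₀ ℂ) :
    Theta α (trigPoly1 c) = trigPoly2 (c.mapDomain (thetaLift α)) := by
  ext q
  rw [Theta, fourierCoeff_trigPoly1, tsum_eq_sum (s := c.support) (by simp_all), trigPoly2,
    Finsupp.linearCombination_mapDomain, Finsupp.linearCombination_apply, Finsupp.sum,
    Finset.sum_apply]
  simp only [Pi.smul_apply, Function.comp_apply, fourier2, thetaLift, smul_eq_mul, mul_assoc]

lemma Theta_mul_star {F : Set ℤ}
    (hF : ∀ i ∈ F, ∀ j ∈ F, thetaLift α (i - j) = thetaLift α i - thetaLift α j)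
    {p : 𝕋 → ℂ} (hp : p ∈ T1 F) :
    Theta α (p * star p) = Theta α p * star (Theta α p) := by
  rw [T1_eq_image_supported] at hp
  obtain ⟨c, hc, rfl⟩ := hp
  rw [← trigPoly1_autocorrelation, Theta_trigPoly1, Theta_trigPoly1,
    mapDomain_autocorrelation fun i hi j hj => hF i (hc hi) j (hc hj), trigPoly2_autocorrelation]

lemma image_Theta_T1 (F : Set ℤ) : Theta α '' T1 F = T2 (thetaLift α '' F) := by
  rw [T1_eq_image_supported, T2_eq_image_supported,
    ← Finsupp.lmapDomain_supported ℂ ℂ (thetaLift α) F, Submodule.map_coe, Set.image_image,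
    Set.image_image]
  exact Set.image_congr fun c _ => Theta_trigPoly1 c

end Theta

/-- For `0 < β ≤ 1/4`, `Θ_α(|p|²) = |Θ_α(p)|²` for `p ∈ 𝔗₁(F₁(α,β))`, and consequently
`Θ_α` maps `𝔖₁(F₁(α,β))` onto `𝔖₂(F₂(α,β))`. -/
theorem statement8 (α β : ℝ) (hβ0 : 0 < β) (hβ : β ≤ 1 / 4) :
    (∀ p ∈ T1 (F1set α β),
      Theta α (fun x => p x * (starRingEnd ℂ) (p x)) =
        fun q => Theta α p q * (starRingEnd ℂ) (Theta α p q)) ∧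
    Theta α '' S1 (F1set α β) = S2 (F2set α β) := by
  have Theta_mul_star_of_mem (p) (hp : p ∈ T1 (F1set α β)) :
      Theta α (p * star p) = Theta α p * star (Theta α p) :=
    Theta_mul_star (fun _ hi _ hj => thetaLift_sub hi hj (by linarith)) hp
  refine ⟨Theta_mul_star_of_mem, ?_⟩
  calc Theta α '' S1 (F1set α β)
      = (fun p => Theta α (p * star p)) '' T1 (F1set α β) := by
        rw [S1_eq_image_mul_star, Set.image_image]
    _ = (fun p => Theta α p * star (Theta α p)) '' T1 (F1set α β) :=
        Set.image_congr Theta_mul_star_of_mem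
    _ = (fun q => q * star q) '' T2 (F2set α β) := by
        rw [← image_thetaLift_F1set (by linarith), ← image_Theta_T1, Set.image_image]
    _ = S2 (F2set α β) := (S2_eq_image_mul_star _).symm
end
end

section
/- If α ∈ ℚ then for every β > 0 the set F₂(α,β) = {(j,k) ∈ ℤ² : |k − jα| < β} has Property A; that is, every nonnegative trigonometric polynomial on 𝕋² with frequencies in F₂(α,β) − F₂(α,β) is a uniform limit of functions |q|² with q a trigonometric polynomial with frequencies in F₂(α,β). -/
open Complex MeasureTheory Real Filter

noncomputable section

/-!
A uniform limit of squared moduli is nonnegative, and its Fourier coefficients outside `F - F`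
vanish by continuity, so only the approximation of a nonnegative `t` has content.

For `α = a / b` the set `F₂(α, β)` is a strip `{u | m ≤ φ u ≤ m + N}` of the homomorphism
`φ (j, k) = b k - a j`, and since `a` and `b` are coprime, multiplication by a character translates
it to `{u | 0 ≤ φ u ≤ N}`. Adding a small constant, assume `t > 0`. Approximate `log t` uniformly by
a real trigonometric polynomial and let `z` be its analytic half: `2 Re z` is that polynomial and
all frequencies `u` of `z` satisfy `0 ≤ φ u`. Partial sums `q` of `exp z` and `w` of `exp (-z)`
again have only such frequencies, and `|q|² ≈ t`, `q ≈ t * conj w` uniformly.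

Call `φ u` the degree of `u`. The polynomial `t * conj w` has degrees at most `N`, so the part `r`
of `q` of degree greater than `N` is orthogonal to everything else in `q - t * conj w`, along every
orbit of the action of `𝕋` on `𝕋²` dual to `φ`. Hence `r` is small in `L²` along orbits, and
`p = q - r`, whose frequencies lie in the strip, satisfies `|p|² ≈ t` in `L¹` along orbits. As
`|p|² - t` restricts to a trigonometric polynomial with at most `2N + 1` frequencies on each orbit,
it is uniformly small.
-/

open scoped ComplexOrder Pointwise

section CompactSpace

variable {X E : Type*} [TopologicalSpace X] [CompactSpace X] [MeasurableSpace X]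
  [OpensMeasurableSpace X] {μ : Measure X} [NormedAddCommGroup E]

lemma integrable_of_continuous [IsFiniteMeasureOnCompacts μ] {f : X → E} (hf : Continuous f) :
    Integrable f μ :=
  hf.integrable_of_hasCompactSupport (HasCompactSupport.of_compactSpace f)

lemma integral_norm_sq_le_of_integral_mul_conj_eq_zero [IsFiniteMeasureOnCompacts μ]
    {f g : C(X, ℂ)} (hfg : ∫ x, f x * (starRingEnd ℂ) (g x) ∂μ = 0) :
    ∫ x, ‖f x‖ ^ 2 ∂μ ≤ ∫ x, ‖f x + g x‖ ^ 2 ∂μ := by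
  have expand (x : X) : ‖f x + g x‖ ^ 2 =
      ‖f x‖ ^ 2 + ‖g x‖ ^ 2 + 2 * (f x * (starRingEnd ℂ) (g x)).re := by
    simpa only [Complex.normSq_eq_norm_sq] using Complex.normSq_add (f x) (g x)
  have re_eq_zero : ∫ x, (f x * (starRingEnd ℂ) (g x)).re ∂μ = 0 := by
    have := integral_re (𝕜 := ℂ) (μ := μ) (f := fun x => f x * (starRingEnd ℂ) (g x))
      (integrable_of_continuous (by fun_prop))
    rw [hfg] at this
    simpa using this
  simp_rw [expand]
  rw [integral_add (integrable_of_continuous (by fun_prop))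
      (integrable_of_continuous (by fun_prop)),
    integral_add (integrable_of_continuous (by fun_prop)) (integrable_of_continuous (by fun_prop)),
    integral_const_mul, re_eq_zero, mul_zero, add_zero]
  exact le_add_of_nonneg_right (integral_nonneg fun _ => by positivity)

lemma sq_integral_norm_le [IsProbabilityMeasure μ] {f : X → E} (hf : Continuous f) :
    (∫ x, ‖f x‖ ∂μ) ^ 2 ≤ ∫ x, ‖f x‖ ^ 2 ∂μ :=
  (convexOn_pow 2).map_integral_le (by fun_prop) isClosed_Ici (ae_of_all _ fun _ => norm_nonneg _)
    (integrable_of_continuous (by fun_prop)) (integrable_of_continuous (by fun_prop))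

lemma integral_norm_mul_star_self_sub_le [IsProbabilityMeasure μ] {p r t : C(X, ℂ)} {B η : ℝ}
    (hη : 0 ≤ η) (hB : ‖p + r‖ ≤ B) (ht : ‖(p + r) * star (p + r) - t‖ ≤ η)
    (hr : ∫ x, ‖r x‖ ^ 2 ∂μ ≤ η ^ 2) :
    ∫ x, ‖(p * star p - t) x‖ ∂μ ≤ η + 2 * B * η + η ^ 2 := by
  have pointwise (x : X) : ‖(p * star p - t) x‖ ≤ η + 2 * B * ‖r x‖ + ‖r x‖ ^ 2 := by
    have hx : (p * star p - t) x = ((p + r) * star (p + r) - t) x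
        - (r x * star ((p + r) x) + (p + r) x * star (r x)) + r x * star (r x) := by
      simp only [ContinuousMap.sub_apply, ContinuousMap.mul_apply, ContinuousMap.add_apply,
        ContinuousMap.star_apply, star_add]
      ring
    have hq : ‖(p + r) x‖ ≤ B := ((p + r).norm_coe_le_norm x).trans hB
    have ht' := (((p + r) * star (p + r) - t).norm_coe_le_norm x).trans ht
    calc ‖(p * star p - t) x‖
        ≤ ‖((p + r) * star (p + r) - t) x‖
          + (‖r x‖ * ‖(p + r) x‖ + ‖(p + r) x‖ * ‖r x‖) + ‖r x‖ * ‖r x‖ := by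
          rw [hx]
          refine norm_add_le_of_le (norm_sub_le_of_le le_rfl (norm_add_le_of_le ?_ ?_)) ?_ <;>
            rw [norm_mul, norm_star]
      _ ≤ η + (‖r x‖ * B + B * ‖r x‖) + ‖r x‖ * ‖r x‖ := by gcongr
      _ = η + 2 * B * ‖r x‖ + ‖r x‖ ^ 2 := by ring
  have hr_one : ∫ x, ‖r x‖ ∂μ ≤ η :=
    le_of_sq_le_sq ((sq_integral_norm_le r.continuous).trans hr) hη
  have hB₀ : 0 ≤ B := (norm_nonneg _).trans hB
  calc ∫ x, ‖(p * star p - t) x‖ ∂μ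
      ≤ ∫ x, (η + 2 * B * ‖r x‖ + ‖r x‖ ^ 2) ∂μ :=
        integral_mono (integrable_of_continuous (by fun_prop))
          (integrable_of_continuous (by fun_prop)) pointwise
    _ = η + 2 * B * ∫ x, ‖r x‖ ∂μ + ∫ x, ‖r x‖ ^ 2 ∂μ := by
        rw [integral_add (integrable_of_continuous (by fun_prop))
          (integrable_of_continuous (by fun_prop)), integral_add
          (integrable_of_continuous (by fun_prop)) (integrable_of_continuous (by fun_prop)),
          integral_const_mul, integral_const, probReal_univ, one_smul]
    _ ≤ η + 2 * B * η + η ^ 2 := by gcongr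

end CompactSpace

section Circle

open AddCircle

variable {T : ℝ} [Fact (0 < T)]

lemma fourier_one_injective : Function.Injective (fourier 1 : AddCircle T → ℂ) := fun _ _ h =>
  injective_toCircle (Fact.out : 0 < T).ne' (Circle.coe_injective (by simpa using h))

lemma fourierCoeff_eq_zero_of_mem_span_fourier {S : Set ℤ} {n : ℤ} (hn : n ∉ S)
    {f : C(AddCircle T, ℂ)} (hf : f ∈ Submodule.span ℂ (fourier '' S)) : fourierCoeff f n = 0 := by
  induction hf using Submodule.span_induction with
  | mem _ h =>
    obtain ⟨m, hm, rfl⟩ := h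
    rw [fourierCoeff_fourier, Pi.single_eq_of_ne (ne_of_mem_of_not_mem hm hn).symm]
  | zero => simp [fourierCoeff]
  | add f g _ _ hf hg =>
    rw [ContinuousMap.coe_add, fourierCoeff.add (integrable_of_continuous f.continuous)
      (integrable_of_continuous g.continuous), Pi.add_apply, hf, hg, add_zero]
  | smul c f _ hf => rw [ContinuousMap.coe_smul, fourierCoeff.const_smul, hf, smul_zero]

lemma integral_eq_zero_of_mem_span_fourier {S : Set ℤ} (hS : 0 ∉ S) {f : C(AddCircle T, ℂ)}
    (hf : f ∈ Submodule.span ℂ (fourier '' S)) : ∫ x, f x ∂haarAddCircle = 0 := by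
  simpa [fourierCoeff] using fourierCoeff_eq_zero_of_mem_span_fourier hS hf

lemma sum_fourierCoeff_smul_fourier_of_mem_span {s : Finset ℤ} {f : C(AddCircle T, ℂ)}
    (hf : f ∈ Submodule.span ℂ (fourier '' (s : Set ℤ))) :
    ∑ n ∈ s, fourierCoeff f n • fourier n = f := by
  induction hf using Submodule.span_induction with
  | mem _ h =>
    obtain ⟨m, hm, rfl⟩ := h
    simp [fourierCoeff_fourier, Pi.single_apply, Finset.mem_coe.1 hm]
  | zero => simp [fourierCoeff]
  | add f g _ _ hf hg =>
    simp_rw [ContinuousMap.coe_add, fourierCoeff.add (integrable_of_continuous f.continuous)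
      (integrable_of_continuous g.continuous), Pi.add_apply, add_smul, Finset.sum_add_distrib,
      hf, hg]
  | smul c f _ hf =>
    simp_rw [ContinuousMap.coe_smul, fourierCoeff.const_smul, smul_assoc, ← Finset.smul_sum, hf]

lemma norm_fourierCoeff_le_integral_norm (f : AddCircle T → ℂ) (n : ℤ) :
    ‖fourierCoeff f n‖ ≤ ∫ x, ‖f x‖ ∂haarAddCircle := by
  refine (norm_integral_le_integral_norm _).trans_eq ?_
  simp only [norm_smul, fourier_apply, Circle.norm_coe, one_mul]

lemma norm_le_card_mul_integral_norm_of_mem_span_fourier {s : Finset ℤ} {f : C(AddCircle T, ℂ)}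
    (hf : f ∈ Submodule.span ℂ (fourier '' (s : Set ℤ))) :
    ‖f‖ ≤ s.card * ∫ x, ‖f x‖ ∂haarAddCircle := by
  calc ‖f‖ = ‖∑ n ∈ s, fourierCoeff f n • fourier n‖ :=
        congrArg norm (sum_fourierCoeff_smul_fourier_of_mem_span hf).symm
    _ ≤ ∑ n ∈ s, ‖fourierCoeff f n‖ := by
        refine (norm_sum_le _ _).trans_eq (Finset.sum_congr rfl fun n _ => ?_)
        rw [norm_smul, fourier_norm, mul_one]
    _ ≤ ∑ _n ∈ s, ∫ x, ‖f x‖ ∂haarAddCircle :=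
        Finset.sum_le_sum fun n _ => norm_fourierCoeff_le_integral_norm f n
    _ = s.card * ∫ x, ‖f x‖ ∂haarAddCircle := by rw [Finset.sum_const, nsmul_eq_mul]

end Circle

section TrigPoly

/-- The character `(x, y) ↦ e^{2πi(jx + ky)}` of `𝕋²` with frequency `u = (j, k)`. -/
def fourier₂ (u : ℤ × ℤ) : C(𝕋 × 𝕋, ℂ) :=
  (fourier u.1).comp ContinuousMap.fst * (fourier u.2).comp ContinuousMap.snd

lemma fourier₂_apply (u : ℤ × ℤ) (p : 𝕋 × 𝕋) :
    fourier₂ u p = fourier u.1 p.1 * fourier u.2 p.2 := rfl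

lemma fourier₂_zero : fourier₂ 0 = 1 := by
  ext p
  simp [fourier₂_apply]

lemma fourier₂_add (u v : ℤ × ℤ) : fourier₂ (u + v) = fourier₂ u * fourier₂ v := by
  ext p
  simp only [fourier₂_apply, Prod.fst_add, Prod.snd_add, fourier_add, ContinuousMap.mul_apply]
  ring

lemma star_fourier₂ (u : ℤ × ℤ) : star (fourier₂ u) = fourier₂ (-u) := by
  ext p
  simp only [ContinuousMap.star_apply, fourier₂_apply, star_mul', Prod.fst_neg, Prod.snd_neg,
    fourier_neg, RCLike.star_def]

lemma fourier₂_mul_star_self (u : ℤ × ℤ) : fourier₂ u * star (fourier₂ u) = 1 := by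
  rw [star_fourier₂, ← fourier₂_add, add_neg_cancel, fourier₂_zero]

/-- The trigonometric polynomials on `𝕋²` with frequencies in `F`, as a subspace of `C(𝕋², ℂ)`;
this is `𝔗₂(F)`, see `mem_T2_iff`. -/
def trigPoly (F : Set (ℤ × ℤ)) : Submodule ℂ C(𝕋 × 𝕋, ℂ) := Submodule.span ℂ (fourier₂ '' F)

variable {F G H : Set (ℤ × ℤ)} {f g : C(𝕋 × 𝕋, ℂ)}

lemma fourier₂_mem_trigPoly {u : ℤ × ℤ} (hu : u ∈ F) : fourier₂ u ∈ trigPoly F :=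
  Submodule.subset_span (Set.mem_image_of_mem _ hu)

lemma one_mem_trigPoly (hF : 0 ∈ F) : 1 ∈ trigPoly F :=
  fourier₂_zero ▸ fourier₂_mem_trigPoly hF

lemma trigPoly_mono (h : F ⊆ G) : trigPoly F ≤ trigPoly G :=
  Submodule.span_mono (Set.image_mono h)

lemma mul_mem_trigPoly (h : F + G ⊆ H) (hf : f ∈ trigPoly F) (hg : g ∈ trigPoly G) :
    f * g ∈ trigPoly H := by
  have hfg : f * g ∈ Submodule.span ℂ (fourier₂ '' F * fourier₂ '' G) := by
    rw [← Submodule.span_mul_span]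
    exact Submodule.mul_mem_mul hf hg
  refine Submodule.span_le.2 ?_ hfg
  rintro _ ⟨_, ⟨u, hu, rfl⟩, _, ⟨v, hv, rfl⟩, rfl⟩
  dsimp only
  rw [← fourier₂_add]
  exact fourier₂_mem_trigPoly (h (Set.add_mem_add hu hv))

lemma star_mem_trigPoly (h : -F ⊆ G) (hf : f ∈ trigPoly F) : star f ∈ trigPoly G := by
  induction hf using Submodule.span_induction with
  | mem _ hu =>
    obtain ⟨u, hu, rfl⟩ := hu
    rw [star_fourier₂]
    exact fourier₂_mem_trigPoly (h (Set.neg_mem_neg.2 hu))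
  | zero => simp
  | add f g _ _ hf hg => rw [star_add]; exact add_mem hf hg
  | smul c f _ hf => rw [star_smul]; exact Submodule.smul_mem _ _ hf

lemma exists_add_of_mem_trigPoly_union (hf : f ∈ trigPoly (F ∪ G)) :
    ∃ g ∈ trigPoly F, ∃ h ∈ trigPoly G, g + h = f := by
  rwa [trigPoly, Set.image_union, Submodule.span_union, Submodule.mem_sup] at hf

/-- The trigonometric polynomials with frequencies in an additive submonoid `M` of `ℤ²`, as a
subalgebra of `C(𝕋², ℂ)`. -/
def trigSubalgebra (M : AddSubmonoid (ℤ × ℤ)) : Subalgebra ℂ C(𝕋 × 𝕋, ℂ) where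
  carrier := trigPoly M
  mul_mem' := mul_mem_trigPoly (Set.add_subset_iff.2 fun _ hu _ hv => M.add_mem hu hv)
  add_mem' := add_mem
  algebraMap_mem' c := by
    rw [Algebra.algebraMap_eq_smul_one]
    exact Submodule.smul_mem _ c (one_mem_trigPoly M.zero_mem)

lemma exp_mem_closure_trigPoly {M : AddSubmonoid (ℤ × ℤ)} (hf : f ∈ trigPoly M) :
    NormedSpace.exp f ∈ closure (trigPoly M : Set C(𝕋 × 𝕋, ℂ)) :=
  NormedSpace.exp_mem (R := ℂ) (trigSubalgebra M).isClosed_topologicalClosure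
    ((trigSubalgebra M).le_topologicalClosure hf)

lemma dense_trigPoly_univ : Dense (trigPoly Set.univ : Set C(𝕋 × 𝕋, ℂ)) := by
  let A : StarSubalgebra ℂ C(𝕋 × 𝕋, ℂ) :=
    { trigSubalgebra ⊤ with star_mem' := star_mem_trigPoly (Set.subset_univ _) }
  have separates : A.SeparatesPoints := by
    intro x y hxy
    rcases not_and_or.1 (mt Prod.ext_iff.2 hxy) with h | h
    · refine ⟨_, ⟨fourier₂ (1, 0), fourier₂_mem_trigPoly trivial, rfl⟩, ?_⟩
      simpa [fourier₂_apply] using fourier_one_injective.ne h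
    · refine ⟨_, ⟨fourier₂ (0, 1), fourier₂_mem_trigPoly trivial, rfl⟩, ?_⟩
      simpa [fourier₂_apply] using fourier_one_injective.ne h
  have := ContinuousMap.starSubalgebra_topologicalClosure_eq_top_of_separatesPoints A separates
  rw [dense_iff_closure_eq]
  exact congrArg (SetLike.coe (B := C(𝕋 × 𝕋, ℂ))) this

end TrigPoly

section Coefficients

open AddCircle

lemma integral_fourier₂ (u : ℤ × ℤ) :
    ∫ p, fourier₂ u p ∂(haarAddCircle.prod haarAddCircle) = if u = 0 then 1 else 0 := by
  have integral_fourier (n : ℤ) :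
      ∫ x : 𝕋, fourier n x ∂haarAddCircle = if n = 0 then 1 else 0 := by
    simpa [fourierCoeff, Pi.single_apply, eq_comm] using
      congrFun (fourierCoeff_fourier (T := 1) n) 0
  simp_rw [fourier₂_apply]
  rw [integral_prod_mul (fun x : 𝕋 => (fourier u.1 x : ℂ)) (fun y : 𝕋 => (fourier u.2 y : ℂ)),
    integral_fourier, integral_fourier]
  simp [Prod.ext_iff, ← ite_and, and_comm]

/-- The Fourier coefficient `coeff2 · u` as a continuous linear functional on `C(𝕋², ℂ)`. -/
def fourierCoeff₂ (u : ℤ × ℤ) : C(𝕋 × 𝕋, ℂ) →L[ℂ] ℂ :=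
  innerSL ℂ (ContinuousMap.toLp 2 (haarAddCircle.prod haarAddCircle) ℂ (fourier₂ u)) ∘L
    ContinuousMap.toLp 2 (haarAddCircle.prod haarAddCircle) ℂ

lemma fourierCoeff₂_apply (u : ℤ × ℤ) (f : C(𝕋 × 𝕋, ℂ)) :
    fourierCoeff₂ u f =
      ∫ p, f p * fourier₂ (-u) p ∂(haarAddCircle.prod haarAddCircle) := by
  rw [fourierCoeff₂, ContinuousLinearMap.comp_apply, innerSL_apply_apply, ContinuousMap.inner_toLp,
    ← star_fourier₂]
  rfl

lemma coeff2_eq_fourierCoeff₂ (f : C(𝕋 × 𝕋, ℂ)) (u : ℤ × ℤ) : coeff2 f u = fourierCoeff₂ u f := by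
  rw [fourierCoeff₂_apply, integral_prod _ (integrable_of_continuous (by fun_prop))]
  simp only [coeff2, fourier₂_apply, Prod.fst_neg, Prod.snd_neg, mul_assoc]

lemma fourierCoeff₂_fourier₂ (u v : ℤ × ℤ) :
    fourierCoeff₂ u (fourier₂ v) = if v = u then 1 else 0 := by
  simp_rw [fourierCoeff₂_apply, ← ContinuousMap.mul_apply, ← fourier₂_add]
  rw [integral_fourier₂]
  simp only [← sub_eq_add_neg, sub_eq_zero]

lemma fourierCoeff₂_linearCombination (c : (ℤ × ℤ) →₀ ℂ) (u : ℤ × ℤ) :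
    fourierCoeff₂ u (Finsupp.linearCombination ℂ fourier₂ c) = c u := by
  simp [Finsupp.linearCombination_apply, map_finsuppSum, fourierCoeff₂_fourier₂,
    eq_comm (a := (0 : ℂ))]

variable {F G : Set (ℤ × ℤ)} {f : C(𝕋 × 𝕋, ℂ)}

lemma mem_trigPoly_iff :
    f ∈ trigPoly F ↔ f ∈ trigPoly Set.univ ∧ ∀ u ∉ F, fourierCoeff₂ u f = 0 := by
  simp only [trigPoly, Finsupp.mem_span_image_iff_linearCombination]
  constructor
  · rintro ⟨c, hc, rfl⟩
    refine ⟨⟨c, by simp, rfl⟩, fun u hu => ?_⟩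
    rw [fourierCoeff₂_linearCombination]
    exact (Finsupp.mem_supported' _ _).1 hc u hu
  · rintro ⟨⟨c, -, rfl⟩, hc⟩
    simp_rw [fourierCoeff₂_linearCombination] at hc
    exact ⟨c, (Finsupp.mem_supported' _ _).2 hc, rfl⟩

lemma mem_trigPoly_of_mem_closure (hf : f ∈ trigPoly Set.univ)
    (hF : f ∈ closure (trigPoly F : Set C(𝕋 × 𝕋, ℂ))) : f ∈ trigPoly F :=
  mem_trigPoly_iff.2 ⟨hf, fun u hu => closure_minimal
    (fun _ hg => (mem_trigPoly_iff.1 hg).2 u hu)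
    (isClosed_eq (fourierCoeff₂ u).continuous continuous_const) hF⟩

lemma isTrigPoly2_iff {t : 𝕋 × 𝕋 → ℂ} : IsTrigPoly2 t ↔ ∃ f ∈ trigPoly Set.univ, ⇑f = t := by
  have coe_linearCombination (c : (ℤ × ℤ) →₀ ℂ) : ⇑(Finsupp.linearCombination ℂ fourier₂ c) =
      fun p => ∑ u ∈ c.support, c u * fourier u.1 p.1 * fourier u.2 p.2 := by
    ext p
    simp [Finsupp.linearCombination_apply, Finsupp.sum, fourier₂_apply, mul_assoc]
  simp only [IsTrigPoly2, trigPoly, Finsupp.mem_span_image_iff_linearCombination,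
    Finsupp.supported_univ, Submodule.mem_top, true_and, exists_exists_eq_and,
    coe_linearCombination, eq_comm (a := t)]

lemma mem_T2_iff {t : 𝕋 × 𝕋 → ℂ} : t ∈ T2 F ↔ ∃ f ∈ trigPoly F, ⇑f = t := by
  constructor
  · rintro ⟨ht, hF⟩
    obtain ⟨f, hf, rfl⟩ := isTrigPoly2_iff.1 ht
    refine ⟨f, mem_trigPoly_iff.2 ⟨hf, fun u hu => ?_⟩, rfl⟩
    rw [← coeff2_eq_fourierCoeff₂]
    exact not_not.1 fun h => hu (hF h)
  · rintro ⟨f, hf, rfl⟩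
    obtain ⟨hf, hF⟩ := mem_trigPoly_iff.1 hf
    refine ⟨isTrigPoly2_iff.2 ⟨f, hf, rfl⟩, fun u hu => not_not.1 fun h => hu ?_⟩
    rw [coeff2_eq_fourierCoeff₂, hF u h]

end Coefficients

section SquaredModuli

/-- The squared moduli `|q|²` of trigonometric polynomials with frequencies in `F`, as elements of
`C(𝕋², ℂ)`; this is `𝔖₂(F)`, see `mem_S2_iff`. -/
def squaredModuli (F : Set (ℤ × ℤ)) : Set C(𝕋 × 𝕋, ℂ) := (fun q => q * star q) '' trigPoly F

variable {F G : Set (ℤ × ℤ)}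

lemma squaredModuli_subset_add_singleton (u : ℤ × ℤ) :
    squaredModuli F ⊆ squaredModuli (F + {u}) := by
  rintro _ ⟨q, hq, rfl⟩
  refine ⟨q * fourier₂ u, mul_mem_trigPoly le_rfl hq (fourier₂_mem_trigPoly rfl), ?_⟩
  dsimp only
  rw [star_mul', mul_mul_mul_comm, fourier₂_mul_star_self, mul_one]

lemma squaredModuli_mono (h : F ⊆ G) : squaredModuli F ⊆ squaredModuli G :=
  Set.image_mono (trigPoly_mono h)

lemma squaredModuli_subset_trigPoly : squaredModuli F ⊆ trigPoly (diffSet F) := by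
  rintro _ ⟨q, hq, rfl⟩
  refine mul_mem_trigPoly ?_ hq (star_mem_trigPoly subset_rfl hq)
  rintro _ ⟨u, hu, v, hv, rfl⟩
  exact ⟨u, hu, -v, hv, (sub_neg_eq_add u v).symm⟩

lemma nonneg_of_mem_closure_squaredModuli {f : C(𝕋 × 𝕋, ℂ)}
    (hf : f ∈ closure (squaredModuli F)) : 0 ≤ f := by
  refine closure_minimal ?_ isClosed_Ici hf
  rintro _ ⟨q, -, rfl⟩
  exact mul_star_self_nonneg q

lemma mem_S2_iff {t : 𝕋 × 𝕋 → ℂ} : t ∈ S2 F ↔ ∃ f ∈ squaredModuli F, ⇑f = t := by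
  constructor
  · rintro ⟨_, hqF, rfl⟩
    obtain ⟨q, hq, rfl⟩ := mem_T2_iff.1 hqF
    exact ⟨q * star q, ⟨q, hq, rfl⟩, rfl⟩
  · rintro ⟨_, ⟨q, hq, rfl⟩, rfl⟩
    exact ⟨q, mem_T2_iff.2 ⟨q, hq, rfl⟩, rfl⟩

lemma coe_mem_U2_iff {f : C(𝕋 × 𝕋, ℂ)} :
    ⇑f ∈ U2 F ↔ f ∈ trigPoly Set.univ ∧ f ∈ closure (squaredModuli F) := by
  have isTrigPoly2_coe_iff : IsTrigPoly2 f ↔ f ∈ trigPoly Set.univ := by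
    simp [isTrigPoly2_iff]
  rw [mem_closure_iff_seq_limit, U2, Set.mem_ofPred, isTrigPoly2_coe_iff]
  refine and_congr_right fun _ => ⟨?_, ?_⟩
  · rintro ⟨s, hs, hlim⟩
    choose g hg hgs using fun n => mem_S2_iff.1 (hs n)
    obtain rfl : (fun n => ⇑(g n)) = s := funext hgs
    exact ⟨g, hg, ContinuousMap.tendsto_iff_tendstoUniformly.2 hlim⟩
  · rintro ⟨g, hg, hlim⟩
    exact ⟨fun n => g n, fun n => mem_S2_iff.2 ⟨g n, hg n, rfl⟩,
      ContinuousMap.tendsto_iff_tendstoUniformly.1 hlim⟩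

lemma propertyA_iff : PropertyA F ↔
    ∀ f ∈ trigPoly (diffSet F), 0 ≤ f → f ∈ closure (squaredModuli F) := by
  have nonneg_iff (f : C(𝕋 × 𝕋, ℂ)) : 0 ≤ f ↔ ∀ p, ∃ r : ℝ, 0 ≤ r ∧ f p = r :=
    forall_congr' fun p => RCLike.nonneg_iff_exists_ofReal.trans
      (exists_congr fun r => and_congr_right fun _ => eq_comm)
  have target_iff (f : C(𝕋 × 𝕋, ℂ)) :
      (IsTrigPoly2 f ∧ freq2 f ⊆ diffSet F ∧ ∀ p, ∃ r : ℝ, 0 ≤ r ∧ f p = r) ↔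
        f ∈ trigPoly (diffSet F) ∧ 0 ≤ f := by
    rw [← and_assoc, nonneg_iff]
    exact and_congr_left' (mem_T2_iff.trans (by simp))
  constructor
  · intro h f hf hnonneg
    exact (coe_mem_U2_iff.1 (h.ge ((target_iff f).2 ⟨hf, hnonneg⟩))).2
  · intro h
    ext t
    by_cases ht : IsTrigPoly2 t
    · obtain ⟨f, hf, rfl⟩ := isTrigPoly2_iff.1 ht
      refine coe_mem_U2_iff.trans (Iff.trans ⟨fun ⟨_, hcl⟩ => ⟨?_, ?_⟩, fun ⟨hfF, hnonneg⟩ =>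
        ⟨hf, h f hfF hnonneg⟩⟩ (target_iff f).symm)
      · exact mem_trigPoly_of_mem_closure hf (closure_mono squaredModuli_subset_trigPoly hcl)
      · exact nonneg_of_mem_closure_squaredModuli hcl
    · exact ⟨fun h => absurd h.1 ht, fun h => absurd h.1 ht⟩

end SquaredModuli

section Orbit

open AddCircle

/-- The orbit of `p` under the action of `𝕋` on `𝕋²` dual to `φ`: along it, the character with
frequency `u` becomes a multiple of the character of `𝕋` with frequency `φ u`. -/
def orbit (φ : ℤ × ℤ →+ ℤ) (p : 𝕋 × 𝕋) : C(𝕋, 𝕋 × 𝕋) where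
  toFun s := (p.1 + φ (1, 0) • s, p.2 + φ (0, 1) • s)

variable (φ : ℤ × ℤ →+ ℤ)

lemma orbit_apply_zero (p : 𝕋 × 𝕋) : orbit φ p 0 = p := by simp [orbit]

lemma fourier₂_comp_orbit (u : ℤ × ℤ) (p : 𝕋 × 𝕋) :
    (fourier₂ u).comp (orbit φ p) = fourier₂ u p • fourier (φ u) := by
  have hφ : φ u = u.1 * φ (1, 0) + u.2 * φ (0, 1) := by
    conv_lhs => rw [show u = u.1 • (1, 0) + u.2 • (0, 1) by ext <;> simp]
    simp only [map_add, map_zsmul, smul_eq_mul]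
  ext s
  simp only [ContinuousMap.comp_apply, ContinuousMap.smul_apply, fourier₂_apply, orbit,
    ContinuousMap.coe_mk, fourier_apply, smul_eq_mul, hφ, add_smul, mul_smul, smul_add,
    toCircle_add, Circle.coe_mul]
  ring

variable {φ}

lemma comp_orbit_mem_span_fourier {S : Set ℤ} {f : C(𝕋 × 𝕋, ℂ)} (hf : f ∈ trigPoly (φ ⁻¹' S))
    (p : 𝕋 × 𝕋) : f.comp (orbit φ p) ∈ Submodule.span ℂ (fourier '' S) := by
  induction hf using Submodule.span_induction with
  | mem _ hu =>
    obtain ⟨u, hu, rfl⟩ := hu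
    rw [fourier₂_comp_orbit]
    exact Submodule.smul_mem _ _ (Submodule.subset_span ⟨_, hu, rfl⟩)
  | zero => exact zero_mem _
  | add f g _ _ hf hg => exact add_mem hf hg
  | smul c f _ hf => exact Submodule.smul_mem _ c hf

lemma norm_apply_le_card_mul_integral_orbit {s : Finset ℤ} {f : C(𝕋 × 𝕋, ℂ)}
    (hf : f ∈ trigPoly (φ ⁻¹' s)) (p : 𝕋 × 𝕋) :
    ‖f p‖ ≤ s.card * ∫ x, ‖f (orbit φ p x)‖ ∂haarAddCircle := by
  have := (f.comp (orbit φ p)).norm_coe_le_norm 0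
  rw [ContinuousMap.comp_apply, orbit_apply_zero] at this
  exact this.trans
    (norm_le_card_mul_integral_norm_of_mem_span_fourier (comp_orbit_mem_span_fourier hf p))

lemma integral_orbit_norm_sq_le {N : ℤ} {η : ℝ} {r d : C(𝕋 × 𝕋, ℂ)}
    (hr : r ∈ trigPoly (φ ⁻¹' Set.Ioi N)) (hd : d ∈ trigPoly (φ ⁻¹' Set.Iic N))
    (hrd : ‖r + d‖ ≤ η) (p : 𝕋 × 𝕋) :
    ∫ x, ‖r (orbit φ p x)‖ ^ 2 ∂haarAddCircle ≤ η ^ 2 := by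
  have hmul : r * star d ∈ trigPoly (φ ⁻¹' Set.Ioi 0) := by
    refine mul_mem_trigPoly (F := φ ⁻¹' Set.Ioi N) (G := φ ⁻¹' Set.Ici (-N)) ?_ hr
      (star_mem_trigPoly ?_ hd)
    · rintro _ ⟨u, hu, v, hv, rfl⟩
      simp only [Set.mem_preimage, Set.mem_Ioi, Set.mem_Ici, map_add] at hu hv ⊢
      lia
    · intro u hu
      simp only [Set.mem_neg, Set.mem_preimage, Set.mem_Iic, Set.mem_Ici, map_neg] at hu ⊢
      lia
  calc ∫ x, ‖r (orbit φ p x)‖ ^ 2 ∂haarAddCircle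
      ≤ ∫ x, ‖r (orbit φ p x) + d (orbit φ p x)‖ ^ 2 ∂haarAddCircle :=
        integral_norm_sq_le_of_integral_mul_conj_eq_zero
          (f := r.comp (orbit φ p)) (g := d.comp (orbit φ p))
          (integral_eq_zero_of_mem_span_fourier Set.self_notMem_Ioi
            (comp_orbit_mem_span_fourier hmul p))
    _ ≤ ∫ _x : 𝕋, η ^ 2 ∂haarAddCircle := by
        refine integral_mono (integrable_of_continuous (by fun_prop))
          (integrable_of_continuous (by fun_prop)) fun x => ?_
        dsimp only
        gcongr
        exact ((r + d).norm_coe_le_norm _).trans hrd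
    _ = η ^ 2 := by simp

end Orbit

section Truncation

variable {φ : ℤ × ℤ →+ ℤ} {N : ℕ}

lemma diffSet_preimage_Icc_subset {a b M : ℤ} (h : b - a ≤ M) :
    diffSet (φ ⁻¹' Set.Icc a b) ⊆ φ ⁻¹' Set.Icc (-M) M := by
  rintro _ ⟨u, hu, v, hv, rfl⟩
  simp only [Set.mem_preimage, Set.mem_Icc, map_sub] at hu hv ⊢
  lia

lemma exists_mem_trigPoly_Icc_norm_sub_le {q w t : C(𝕋 × 𝕋, ℂ)} {B η : ℝ} (hη : 0 ≤ η)
    (hq : q ∈ trigPoly (φ ⁻¹' Set.Ici 0)) (hw : w ∈ trigPoly (φ ⁻¹' Set.Ici 0))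
    (ht : t ∈ trigPoly (φ ⁻¹' Set.Icc (-N) N)) (hB : ‖q‖ ≤ B) (hqt : ‖q * star q - t‖ ≤ η)
    (hqw : ‖q - t * star w‖ ≤ η) :
    ∃ p ∈ trigPoly (φ ⁻¹' Set.Icc 0 N),
      ‖p * star p - t‖ ≤ (2 * N + 1) * (η + 2 * B * η + η ^ 2) := by
  rw [← Set.Icc_union_Ioi_eq_Ici (Int.natCast_nonneg N), Set.preimage_union] at hq
  obtain ⟨p, hp, r, hr, rfl⟩ := exists_add_of_mem_trigPoly_union hq
  have hd : p - t * star w ∈ trigPoly (φ ⁻¹' Set.Iic N) := by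
    refine sub_mem (trigPoly_mono (Set.preimage_mono Set.Icc_subset_Iic_self) hp)
      (mul_mem_trigPoly (G := φ ⁻¹' Set.Iic 0) ?_ ht (star_mem_trigPoly ?_ hw))
    · rintro _ ⟨u, hu, v, hv, rfl⟩
      simp only [Set.mem_preimage, Set.mem_Icc, Set.mem_Iic, map_add] at hu hv ⊢
      lia
    · intro u hu
      simpa using hu
  have hrd : ‖r + (p - t * star w)‖ ≤ η := by rwa [← add_sub_assoc, add_comm r p]
  have hpt : p * star p - t ∈ trigPoly (φ ⁻¹' (Finset.Icc (-N : ℤ) N : Finset ℤ)) := by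
    rw [Finset.coe_Icc]
    exact sub_mem (trigPoly_mono (diffSet_preimage_Icc_subset (by simp))
      (squaredModuli_subset_trigPoly ⟨p, hp, rfl⟩)) ht
  have norm_comp_orbit_le (f : C(𝕋 × 𝕋, ℂ)) (x : 𝕋 × 𝕋) : ‖f.comp (orbit φ x)‖ ≤ ‖f‖ :=
    (ContinuousMap.norm_le _ (norm_nonneg f)).2 fun _ => f.norm_coe_le_norm _
  have card_Icc : ((Finset.Icc (-N : ℤ) N).card : ℝ) = 2 * N + 1 := by
    rw [Int.card_Icc, show ((N : ℤ) + 1 - -N).toNat = 2 * N + 1 by lia]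
    push_cast
    rfl
  have hB₀ : 0 ≤ B := (norm_nonneg _).trans hB
  refine ⟨p, hp, (ContinuousMap.norm_le _ (by positivity)).2 fun x => ?_⟩
  calc ‖(p * star p - t) x‖
      ≤ (2 * N + 1) * ∫ y, ‖(p * star p - t) (orbit φ x y)‖ ∂AddCircle.haarAddCircle :=
        card_Icc ▸ norm_apply_le_card_mul_integral_orbit hpt x
    _ ≤ (2 * N + 1) * (η + 2 * B * η + η ^ 2) := by
        gcongr
        exact integral_norm_mul_star_self_sub_le (p := p.comp (orbit φ x))
          (r := r.comp (orbit φ x)) (t := t.comp (orbit φ x)) hη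
          ((norm_comp_orbit_le (p + r) x).trans hB)
          ((norm_comp_orbit_le ((p + r) * star (p + r) - t) x).trans hqt)
          (integral_orbit_norm_sq_le hr hd hrd x)

end Truncation

section AnalyticApproximation

lemma exists_isSelfAdjoint_exp_eq {X : Type*} [TopologicalSpace X] [CompactSpace X] {t : C(X, ℂ)}
    (ht : ∀ x, 0 < t x) : ∃ g : C(X, ℂ), IsSelfAdjoint g ∧ NormedSpace.exp g = t := by
  have re_pos (x : X) : 0 < (t x).re := (Complex.pos_iff.1 (ht x)).1
  have hlog : Continuous fun x => ((Real.log (t x).re : ℝ) : ℂ) :=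
    Complex.continuous_ofReal.comp
      ((Complex.continuous_re.comp t.continuous).log fun x => (re_pos x).ne')
  refine ⟨⟨_, hlog⟩, ?_, ?_⟩
  · ext x
    exact Complex.conj_ofReal _
  · rw [NormedSpace.exp_continuousMap_eq]
    ext x
    change NormedSpace.exp ((Real.log (t x).re : ℝ) : ℂ) = t x
    rw [← Complex.exp_eq_exp_ℂ, ← Complex.ofReal_exp, Real.exp_log (re_pos x)]
    exact Complex.ext rfl (Complex.pos_iff.1 (ht x)).2

lemma norm_exp_sub_mul_star_exp_neg_sq_le {A : Type*} [NormedCommRing A] [NormedAlgebra ℂ A]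
    [CompleteSpace A] [StarRing A] [CStarRing A] (z t : A) :
    ‖NormedSpace.exp z - t * star (NormedSpace.exp (-z))‖ ^ 2 ≤
      ‖NormedSpace.exp (z + star z)‖ * ‖1 - t * NormedSpace.exp (-(z + star z))‖ ^ 2 := by
  let : NormedAlgebra ℚ A := NormedAlgebra.restrictScalars ℚ ℂ A
  have factor : NormedSpace.exp z - t * star (NormedSpace.exp (-z)) =
      NormedSpace.exp z * (1 - t * NormedSpace.exp (-(z + star z))) := by
    rw [NormedSpace.star_exp, star_neg, neg_add, NormedSpace.exp_add, mul_sub, mul_one,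
      mul_left_comm, ← mul_assoc (NormedSpace.exp z), ← NormedSpace.exp_add, add_neg_cancel,
      NormedSpace.exp_zero, one_mul]
  have norm_sq : ‖NormedSpace.exp z‖ ^ 2 = ‖NormedSpace.exp (z + star z)‖ := by
    rw [NormedSpace.exp_add, ← NormedSpace.star_exp, CStarRing.norm_self_mul_star, sq]
  rw [factor, ← norm_sq, ← mul_pow]
  gcongr
  exact norm_mul_le _ _

variable {φ : ℤ × ℤ →+ ℤ}

lemma exists_mem_trigPoly_Ici_add_star_eq {l : C(𝕋 × 𝕋, ℂ)} (hl : l ∈ trigPoly Set.univ) :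
    ∃ z ∈ trigPoly (φ ⁻¹' Set.Ici 0), z + star z = (2⁻¹ : ℂ) • (l + star l) := by
  rw [← Set.preimage_univ (f := φ), ← Set.Ici_union_Iio (a := (0 : ℤ)), Set.preimage_union] at hl
  obtain ⟨a, ha, b, hb, rfl⟩ := exists_add_of_mem_trigPoly_union hl
  refine ⟨(2⁻¹ : ℂ) • (a + star b),
    Submodule.smul_mem _ _ (add_mem ha (star_mem_trigPoly ?_ hb)), ?_⟩
  · intro u hu
    simp only [Set.mem_neg, Set.mem_preimage, Set.mem_Iio, Set.mem_Ici, map_neg] at hu ⊢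
    lia
  · simp only [star_smul, star_inv₀, star_ofNat, star_add, star_star]
    module

lemma exists_mem_trigPoly_Ici_norm_exp_sub_lt {t : C(𝕋 × 𝕋, ℂ)} (ht : ∀ p, 0 < t p)
    {η : ℝ} (hη : 0 < η) :
    ∃ z ∈ trigPoly (φ ⁻¹' Set.Ici 0),
      ‖NormedSpace.exp z * star (NormedSpace.exp z) - t‖ < η ∧
      ‖NormedSpace.exp z - t * star (NormedSpace.exp (-z))‖ < η := by
  obtain ⟨g, hg, rfl⟩ := exists_isSelfAdjoint_exp_eq ht
  let h (l : C(𝕋 × 𝕋, ℂ)) : C(𝕋 × 𝕋, ℂ) := (2⁻¹ : ℂ) • (l + star l)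
  let U : Set C(𝕋 × 𝕋, ℂ) := {l | ‖NormedSpace.exp (h l) - NormedSpace.exp g‖ < η ∧
    ‖NormedSpace.exp (h l)‖ * ‖1 - NormedSpace.exp g * NormedSpace.exp (-h l)‖ ^ 2 < η ^ 2}
  have hU : IsOpen U := by
    have := NormedSpace.exp_continuous (𝔸 := C(𝕋 × 𝕋, ℂ))
    refine .and (isOpen_lt ?_ ?_) (isOpen_lt ?_ ?_) <;> fun_prop
  have hgU : g ∈ U := by
    have hgg : h g = g := by
      simp only [h, hg.star_eq, ← two_smul ℂ g, smul_smul]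
      norm_num
    simp only [U, Set.mem_ofPred, hgg, ← NormedSpace.exp_add]
    simp [hη]
  obtain ⟨l, hlU, hl⟩ := dense_trigPoly_univ.inter_open_nonempty U hU ⟨g, hgU⟩
  obtain ⟨z, hz, hzl⟩ := exists_mem_trigPoly_Ici_add_star_eq (φ := φ) hl
  refine ⟨z, hz, ?_, lt_of_pow_lt_pow_left₀ 2 hη.le ?_⟩
  · rw [NormedSpace.star_exp, ← NormedSpace.exp_add, hzl]
    exact hlU.1
  · refine (norm_exp_sub_mul_star_exp_neg_sq_le _ _).trans_lt ?_
    rw [hzl]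
    exact hlU.2

lemma exists_mem_trigPoly_Ici_norm_sub_lt {t : C(𝕋 × 𝕋, ℂ)} (ht : ∀ p, 0 < t p)
    {η : ℝ} (hη : 0 < η) :
    ∃ q ∈ trigPoly (φ ⁻¹' Set.Ici 0), ∃ w ∈ trigPoly (φ ⁻¹' Set.Ici 0),
      ‖q * star q - t‖ < η ∧ ‖q - t * star w‖ < η := by
  obtain ⟨z, hz, hzt, hzw⟩ := exists_mem_trigPoly_Ici_norm_exp_sub_lt (φ := φ) ht hη
  let M : AddSubmonoid (ℤ × ℤ) := (AddSubmonoid.nonneg ℤ).comap φ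
  have hzM : z ∈ trigPoly M := hz
  have hmem : (NormedSpace.exp z, NormedSpace.exp (-z)) ∈
      closure ((trigPoly M : Set C(𝕋 × 𝕋, ℂ)) ×ˢ (trigPoly M : Set C(𝕋 × 𝕋, ℂ))) := by
    rw [closure_prod_eq]
    exact ⟨exp_mem_closure_trigPoly hzM, exp_mem_closure_trigPoly (neg_mem hzM)⟩
  have hopen : IsOpen {x : C(𝕋 × 𝕋, ℂ) × C(𝕋 × 𝕋, ℂ) |
      ‖x.1 * star x.1 - t‖ < η ∧ ‖x.1 - t * star x.2‖ < η} := by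
    refine .and (isOpen_lt ?_ ?_) (isOpen_lt ?_ ?_) <;> fun_prop
  obtain ⟨⟨q, w⟩, hqw, hq, hw⟩ := mem_closure_iff.1 hmem _ hopen ⟨hzt, hzw⟩
  exact ⟨q, hq, w, hw, hqw⟩

end AnalyticApproximation

section Strip

variable {φ : ℤ × ℤ →+ ℤ} {N : ℕ} {t : C(𝕋 × 𝕋, ℂ)}

lemma mem_closure_squaredModuli_of_pos (ht : t ∈ trigPoly (φ ⁻¹' Set.Icc (-N) N))
    (hpos : ∀ p, 0 < t p) : t ∈ closure (squaredModuli (φ ⁻¹' Set.Icc 0 N)) := by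
  refine Metric.mem_closure_iff.2 fun ε hε => ?_
  have hlim : Tendsto (fun η : ℝ => (2 * N + 1) * (η + 2 * (‖t‖ + 1) * η + η ^ 2))
      (nhdsWithin 0 (Set.Ioi 0)) (nhds 0) :=
    tendsto_nhdsWithin_of_tendsto_nhds (Continuous.tendsto' (by fun_prop) _ _ (by simp))
  obtain ⟨η, hηε, hη, hη_one⟩ :=
    ((hlim.eventually_lt_const hε).and (Ioo_mem_nhdsGT one_pos)).exists
  obtain ⟨q, hq, w, hw, hqt, hqw⟩ := exists_mem_trigPoly_Ici_norm_sub_lt (φ := φ) hpos hη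
  have hB : ‖q‖ ≤ ‖t‖ + 1 := by
    have : ‖q‖ * ‖q‖ ≤ ‖t‖ + 1 := by
      rw [← CStarRing.norm_self_mul_star]
      linarith [norm_le_norm_add_norm_sub' (q * star q) t]
    nlinarith [norm_nonneg t]
  obtain ⟨p, hp, hpt⟩ := exists_mem_trigPoly_Icc_norm_sub_le hη.le hq hw ht hB hqt.le hqw.le
  exact ⟨_, ⟨p, hp, rfl⟩, by rw [dist_eq_norm']; exact hpt.trans_lt hηε⟩

lemma mem_closure_squaredModuli_of_nonneg (ht : t ∈ trigPoly (φ ⁻¹' Set.Icc (-N) N))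
    (hnonneg : 0 ≤ t) : t ∈ closure (squaredModuli (φ ⁻¹' Set.Icc 0 N)) := by
  have hlim : Tendsto (fun c : ℝ => t + (c : ℂ) • (1 : C(𝕋 × 𝕋, ℂ)))
      (nhdsWithin 0 (Set.Ioi 0)) (nhds t) :=
    tendsto_nhdsWithin_of_tendsto_nhds (Continuous.tendsto' (by fun_prop) _ _ (by
      rw [Complex.ofReal_zero]; module))
  refine isClosed_closure.mem_of_tendsto hlim ?_
  filter_upwards [self_mem_nhdsWithin] with c hc
  refine mem_closure_squaredModuli_of_pos
    (add_mem ht (Submodule.smul_mem _ _ (one_mem_trigPoly (by simp)))) fun p => ?_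
  simpa using add_pos_of_nonneg_of_pos (hnonneg p) (Complex.zero_lt_real.2 hc)

lemma propertyA_preimage_Icc (φ : ℤ × ℤ →+ ℤ) (w : ℤ × ℤ) (N : ℕ) :
    PropertyA (φ ⁻¹' Set.Icc (φ w) (φ w + N)) := by
  refine propertyA_iff.2 fun t ht hnonneg => ?_
  have translate : φ ⁻¹' Set.Icc 0 N + {w} ⊆ φ ⁻¹' Set.Icc (φ w) (φ w + N) := by
    rintro _ ⟨u, hu, _, rfl, rfl⟩
    simp only [Set.mem_preimage, Set.mem_Icc, map_add] at hu ⊢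
    lia
  exact closure_mono ((squaredModuli_subset_add_singleton w).trans (squaredModuli_mono translate))
    (mem_closure_squaredModuli_of_nonneg (trigPoly_mono (diffSet_preimage_Icc_subset (by simp)) ht)
      hnonneg)

lemma exists_F2set_eq_preimage_Icc (q : ℚ) {β : ℝ} (hβ : 0 < β) :
    ∃ (φ : ℤ × ℤ →+ ℤ) (w : ℤ × ℤ) (N : ℕ), F2set q β = φ ⁻¹' Set.Icc (φ w) (φ w + N) := by
  let φ : ℤ × ℤ →+ ℤ :=
    (q.den : ℤ) • AddMonoidHom.snd ℤ ℤ - q.num • AddMonoidHom.fst ℤ ℤ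
  have φ_apply (u : ℤ × ℤ) : φ u = q.den * u.2 - q.num * u.1 := by simp [φ]
  have den_pos : (0 : ℝ) < q.den := by exact_mod_cast q.den_pos
  have ceil_pos : 0 < ⌈q.den * β⌉₊ := Nat.ceil_pos.2 (by positivity)
  obtain ⟨M, hM⟩ : ∃ M, ⌈q.den * β⌉₊ = M + 1 := ⟨_, (Nat.sub_add_cancel ceil_pos).symm⟩
  have mem_F2set_iff (u : ℤ × ℤ) : u ∈ F2set q β ↔ (φ u).natAbs ≤ M := by
    have φ_real : (φ u : ℝ) = q.den * (u.2 - u.1 * q) := by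
      rw [φ_apply, Rat.cast_def q]
      push_cast
      field_simp
    rw [← Nat.lt_succ_iff, Nat.succ_eq_add_one, ← hM, Nat.lt_ceil, Nat.cast_natAbs, Int.cast_abs,
      φ_real, abs_mul, abs_of_pos den_pos]
    exact (mul_lt_mul_iff_right₀ den_pos).symm
  obtain ⟨x, y, hxy⟩ : IsCoprime q.num (q.den : ℤ) := Int.isCoprime_iff_nat_coprime.2 q.reduced
  have φ_eq_neg : φ (M * x, -M * y) = -M := by
    rw [φ_apply]
    linear_combination (-(M : ℤ)) * hxy
  refine ⟨φ, (M * x, -M * y), 2 * M, Set.ext fun u => ?_⟩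
  rw [mem_F2set_iff, φ_eq_neg, Set.mem_preimage, Set.mem_Icc]
  lia

end Strip

/-- If `α` is rational then for every `β > 0` the set `F₂(α,β)` has Property A. -/
theorem statement16 (α : ℝ) (hα : ∃ q : ℚ, α = (q : ℝ)) (β : ℝ) (hβ : 0 < β) :
    PropertyA (F2set α β) := by
  obtain ⟨q, rfl⟩ := hα
  obtain ⟨φ, w, N, hF⟩ := exists_F2set_eq_preimage_Icc q hβ
  rw [hF]
  exact propertyA_preimage_Icc φ w N
end
end

section
/- Let α ∈ ℝ, β > 0, and let g = (a b; c d) be an integer matrix with ad − bc = 1 and a + bα ≠ 0, acting on ℤ² by g(j,k) = (aj + bk, cj + dk). Then the image of F₂(α,β) under g equals F₂((c + dα)/(a + bα), β/|a + bα|). -/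
/-!
The linear form `k - jα` vanishes on the line of slope `α`, which `g` carries to the line of slope
`(c + dα)/(a + bα)`. The linear form of the image line, pulled back along `g`, is therefore a
multiple of the original one; the factor is `det g / (a + bα)`, of absolute value `1 / |a + bα|`.
-/

open Complex MeasureTheory Real Filter

noncomputable section

theorem sub_mul_div_eq_det_mul_div {K : Type*} [Field K] (a b c d α x y : K)
    (hα : a + b * α ≠ 0) :
    (c * x + d * y) - (a * x + b * y) * ((c + d * α) / (a + b * α)) =
      (a * d - b * c) * (y - x * α) / (a + b * α) := by
  field_simp
  ring

theorem surjective_of_isUnit_det {R : Type*} [CommRing R] {a b c d : R}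
    (hdet : IsUnit (a * d - b * c)) :
    Function.Surjective fun p : R × R => (a * p.1 + b * p.2, c * p.1 + d * p.2) := by
  obtain ⟨e, he⟩ := hdet.exists_right_inv
  rintro ⟨m, n⟩
  refine ⟨(e * (d * m - b * n), e * (a * n - c * m)), Prod.ext ?_ ?_⟩
  · linear_combination m * he
  · linear_combination n * he

theorem preimage_F2set (α β : ℝ) {a b c d : ℤ} (hdet : a * d - b * c ≠ 0)
    (hα : (a : ℝ) + b * α ≠ 0) :
    (fun jk : ℤ × ℤ => (a * jk.1 + b * jk.2, c * jk.1 + d * jk.2)) ⁻¹'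
        F2set ((c + d * α) / (a + b * α)) (|(a : ℝ) * d - b * c| * β / |a + b * α|) =
      F2set α β := by
  have hdet' : (a : ℝ) * d - b * c ≠ 0 := mod_cast hdet
  ext ⟨j, k⟩
  simp only [F2set, Set.mem_preimage, Set.mem_ofPred_eq, Int.cast_add, Int.cast_mul]
  rw [sub_mul_div_eq_det_mul_div _ _ _ _ _ _ _ hα, abs_div, abs_mul,
    div_lt_div_iff_of_pos_right (abs_pos.mpr hα), mul_lt_mul_iff_right₀ (abs_pos.mpr hdet')]

theorem statement18_general (α β : ℝ) (a b c d : ℤ) (hdet : IsUnit (a * d - b * c))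
    (hα : (a : ℝ) + b * α ≠ 0) :
    (fun jk : ℤ × ℤ => (a * jk.1 + b * jk.2, c * jk.1 + d * jk.2)) '' F2set α β =
      F2set ((c + d * α) / (a + b * α)) (β / |a + b * α|) := by
  have abs_det : |(a : ℝ) * d - b * c| = 1 := mod_cast Int.isUnit_iff_abs_eq.mp hdet
  rw [← preimage_F2set α β hdet.ne_zero hα,
    Set.image_preimage_eq _ (surjective_of_isUnit_det hdet), abs_det, one_mul]

/-- For `g = (a b; c d) ∈ SL(2,ℤ)` acting on `ℤ²` by `g(j,k) = (aj+bk, cj+dk)`, with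
`a + bα ≠ 0`, the image of `F₂(α,β)` under `g` is `F₂((c+dα)/(a+bα), β/|a+bα|)`. -/
theorem statement18 (α β : ℝ) (hβ : 0 < β) (a b c d : ℤ)
    (hdet : a * d - b * c = 1) (hα : (a : ℝ) + (b : ℝ) * α ≠ 0) :
    (fun jk : ℤ × ℤ => (a * jk.1 + b * jk.2, c * jk.1 + d * jk.2)) '' F2set α β =
      F2set (((c : ℝ) + (d : ℝ) * α) / ((a : ℝ) + (b : ℝ) * α))
        (β / |(a : ℝ) + (b : ℝ) * α|) :=
  statement18_general α β a b c d (hdet ▸ isUnit_one) hα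
end
end
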